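/- Assume a−b is even and N_{m−1} ≠ 0 (i.e. the associated normalized rank-2 bundle with c_1 = 0 is unstable), and let k = max{ j ∈ ℤ : N_{m−j} ≠ 0 } be the index of instability (necessarily k > 0). Then for a general linear form L ∈ R_1, the multiplication map ×L : M_{d−1} → M_d is injective for all d ≤ m+k−1 and surjective for all d ≥ m−k−1. -/

import Mathlib

/-!
The kernel `N` of `φ` is generated by the rows of the alternating matrix of maximal minors of `Φ`,
by exactness of the Buchsbaum–Rim complex. Hence a nonzero element of `N` of minimal degree `e` can
be taken to be a row `s`, say the `i`-th, so that `e = a - b - a i`. By minimality the entries of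
`s` have no common factor, so their zero locus has codimension at least two and misses a general
line `L = 0`. On that line the matrix obtained from `Φ` by omitting its `i`-th column has kernel
generated by the restriction of `s` (Hilbert–Burch), and since `H¹(ℙ¹, 𝒪(j)) = 0` for `j ≥ -1`, its
cokernel vanishes in degrees `≥ e - 1`. The latter makes multiplication by `L` surjective onto
`M_d` for `d ≥ e - 1`. For `d < a i` an element `f` of degree `d` with `φ f ∈ L • G` has zero `i`-th
coordinate, so on the line it is a multiple of `s`; lifting the multiplier gives `f ∈ L • F + N`,
whence injectivity on `M_{d-1}`.
-/

open MvPolynomial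

noncomputable section

variable {K : Type*} [Field K]

/-- `p` is homogeneous of (integer) degree `d`; for `d < 0` this forces `p = 0`. -/
def homog (p : MvPolynomial (Fin 3) K) (d : ℤ) : Prop :=
  IsWeightedHomogeneous (fun _ : Fin 3 => (1 : ℤ)) p d

/-- The degree-`d` graded piece of `⊕_{i=1}^{N} R(-a i)`, as a `K`-subspace of
`Fin N → R`, `R = K[x,y,z]`. -/
def degPiece (N : ℕ) (a : Fin N → ℤ) (d : ℤ) :
    Submodule K (Fin N → MvPolynomial (Fin 3) K) :=
  Submodule.pi Set.univ fun i =>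
    weightedHomogeneousSubmodule K (fun _ : Fin 3 => (1 : ℤ)) (d - a i)

lemma mem_degPiece {N : ℕ} {a : Fin N → ℤ} {d : ℤ} {v : Fin N → MvPolynomial (Fin 3) K} :
    v ∈ degPiece (K := K) N a d ↔ ∀ i, homog (v i) (d - a i) := by
  simp [degPiece, Submodule.mem_pi, mem_weightedHomogeneousSubmodule, homog]

/-- The map `φ : ⊕ R(-a i) → ⊕ R(-b j)` given by the matrix `Φ`, as a `K`-linear map. -/
def phiK (n : ℕ) (Φ : Matrix (Fin n) (Fin (n + 2)) (MvPolynomial (Fin 3) K)) :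
    (Fin (n + 2) → MvPolynomial (Fin 3) K) →ₗ[K] (Fin n → MvPolynomial (Fin 3) K) :=
  (Matrix.mulVecLin Φ).restrictScalars K

/-- The degree-`d` graded piece of `N = ker φ`. -/
def Nd (n : ℕ) (a : Fin (n + 2) → ℤ) (Φ : Matrix (Fin n) (Fin (n + 2)) (MvPolynomial (Fin 3) K))
    (d : ℤ) : Submodule K (Fin (n + 2) → MvPolynomial (Fin 3) K) :=
  degPiece (n + 2) a d ⊓ LinearMap.ker (phiK n Φ)

/-- The image of the degree-`d` piece of `F` inside the degree-`d` piece of `G`,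
viewed as a subspace of the latter. -/
def MdSub (n : ℕ) (a : Fin (n + 2) → ℤ) (b : Fin n → ℤ)
    (Φ : Matrix (Fin n) (Fin (n + 2)) (MvPolynomial (Fin 3) K)) (d : ℤ) :
    Submodule K ↥(degPiece (K := K) n b d) :=
  Submodule.comap (degPiece (K := K) n b d).subtype
    (Submodule.map (phiK n Φ) (degPiece (n + 2) a d))

/-- The degree-`d` graded piece of `M = coker φ`. -/
abbrev Md (n : ℕ) (a : Fin (n + 2) → ℤ) (b : Fin n → ℤ)
    (Φ : Matrix (Fin n) (Fin (n + 2)) (MvPolynomial (Fin 3) K)) (d : ℤ) :=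
  ↥(degPiece (K := K) n b d) ⧸ MdSub n a b Φ d

/-- Multiplication by `L` on tuples of polynomials, as a `K`-linear map. -/
def mulL (N : ℕ) (L : MvPolynomial (Fin 3) K) :
    (Fin N → MvPolynomial (Fin 3) K) →ₗ[K] (Fin N → MvPolynomial (Fin 3) K) :=
  ((LinearMap.lsmul (MvPolynomial (Fin 3) K) (Fin N → MvPolynomial (Fin 3) K)) L).restrictScalars K

lemma mulL_apply {N : ℕ} (L : MvPolynomial (Fin 3) K) (v : Fin N → MvPolynomial (Fin 3) K) :
    mulL N L v = L • v := rfl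

lemma mulL_mem {N : ℕ} {a : Fin N → ℤ} {L : MvPolynomial (Fin 3) K} (hL : homog L 1)
    {d : ℤ} {v : Fin N → MvPolynomial (Fin 3) K} (hv : v ∈ degPiece (K := K) N a (d - 1)) :
    mulL N L v ∈ degPiece (K := K) N a d := by
  rw [mem_degPiece] at hv ⊢
  intro i
  have h := hL.mul (hv i)
  have e : (1 : ℤ) + (d - 1 - a i) = d - a i := by ring
  rw [e] at h
  simpa [mulL_apply, smul_eq_mul, homog] using h

/-- Multiplication by `L` from the degree-`d-1` piece of `G` to the degree-`d` piece. -/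
def mulLres (n : ℕ) (b : Fin n → ℤ) (L : MvPolynomial (Fin 3) K) (hL : homog L 1) (d : ℤ) :
    ↥(degPiece (K := K) n b (d - 1)) →ₗ[K] ↥(degPiece (K := K) n b d) :=
  (mulL n L).restrict fun _ hv => mulL_mem hL hv

lemma mulLres_comap (n : ℕ) (a : Fin (n + 2) → ℤ) (b : Fin n → ℤ)
    (Φ : Matrix (Fin n) (Fin (n + 2)) (MvPolynomial (Fin 3) K))
    (L : MvPolynomial (Fin 3) K) (hL : homog L 1) (d : ℤ) :
    MdSub n a b Φ (d - 1) ≤ Submodule.comap (mulLres n b L hL d) (MdSub n a b Φ d) := by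
  rintro ⟨w, hw⟩ hmem
  obtain ⟨v, hv, hφv⟩ := hmem
  refine ⟨mulL (n + 2) L v, mulL_mem hL hv, ?_⟩
  show phiK n Φ (mulL (n + 2) L v) = ((mulLres n b L hL d) ⟨w, hw⟩ : Fin n → MvPolynomial (Fin 3) K)
  have : phiK n Φ (mulL (n + 2) L v) = L • phiK n Φ v := by
    simp [phiK, mulL_apply]
  rw [this, hφv]
  rfl

/-- The map induced by multiplication by `L` from `M_{d-1}` to `M_d`,
where `M = coker φ`. -/
def mulLmap (n : ℕ) (a : Fin (n + 2) → ℤ) (b : Fin n → ℤ)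
    (Φ : Matrix (Fin n) (Fin (n + 2)) (MvPolynomial (Fin 3) K))
    (L : MvPolynomial (Fin 3) K) (hL : homog L 1) (d : ℤ) :
    Md n a b Φ (d - 1) →ₗ[K] Md n a b Φ d :=
  Submodule.mapQ (MdSub n a b Φ (d - 1)) (MdSub n a b Φ d) (mulLres n b L hL d)
    (mulLres_comap n a b Φ L hL d)

/-- The linear form with coefficient vector `c`. -/
def linform (c : Fin 3 → K) : MvPolynomial (Fin 3) K := ∑ i, C (c i) * X i

lemma homog_linform (c : Fin 3 → K) : homog (linform c) 1 := by
  rw [homog, ← mem_weightedHomogeneousSubmodule]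
  refine sum_mem fun i _ => ?_
  rw [mem_weightedHomogeneousSubmodule]
  simpa using (isWeightedHomogeneous_C (fun _ : Fin 3 => (1 : ℤ)) (c i)).mul
    (isWeightedHomogeneous_X K (fun _ : Fin 3 => (1 : ℤ)) i)

/-- Finite length of `coker φ`: all sufficiently high graded pieces vanish. -/
def FiniteColength (n : ℕ) (a : Fin (n + 2) → ℤ) (b : Fin n → ℤ)
    (Φ : Matrix (Fin n) (Fin (n + 2)) (MvPolynomial (Fin 3) K)) : Prop :=
  ∃ D : ℤ, ∀ d : ℤ, D ≤ d →
    degPiece (K := K) n b d ≤ Submodule.map (phiK n Φ) (degPiece (n + 2) a d)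

end

section BorderedDeterminant

open Matrix

/-- The square matrix whose rows are those of `Φ`, followed by `f` and `g`. -/
def borderedMatrix {R : Type*} {n : ℕ} (Φ : Matrix (Fin n) (Fin (n + 2)) R)
    (f g : Fin (n + 2) → R) : Matrix (Fin (n + 2)) (Fin (n + 2)) R :=
  of (Fin.snoc (α := fun _ => Fin (n + 2) → R) (Fin.snoc (α := fun _ => Fin (n + 2) → R) Φ f) g)

section Rows

variable {R : Type*} {n : ℕ} (Φ : Matrix (Fin n) (Fin (n + 2)) R) (f g : Fin (n + 2) → R)

lemma borderedMatrix_castSucc_castSucc (l : Fin n) :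
    borderedMatrix Φ f g l.castSucc.castSucc = Φ l :=
  (Fin.snoc_castSucc (α := fun _ => Fin (n + 2) → R) ..).trans
    (Fin.snoc_castSucc (α := fun _ => Fin (n + 2) → R) ..)

lemma borderedMatrix_castSucc_last :
    borderedMatrix Φ f g (Fin.last n).castSucc = f :=
  (Fin.snoc_castSucc (α := fun _ => Fin (n + 2) → R) ..).trans
    (Fin.snoc_last (α := fun _ => Fin (n + 2) → R) ..)

lemma borderedMatrix_last : borderedMatrix Φ f g (Fin.last (n + 1)) = g :=
  Fin.snoc_last (α := fun _ => Fin (n + 2) → R) ..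

lemma borderedMatrix_eq_submatrix_fromRows :
    borderedMatrix Φ f g = (fromRows Φ (of ![f, g])).submatrix finSumFinEquiv.symm id := by
  have hlast : (finSumFinEquiv (n := 2)).symm (Fin.last (n + 1)) = Sum.inr 1 :=
    finSumFinEquiv.symm_apply_eq.2 rfl
  have hlast' : (finSumFinEquiv (n := 2)).symm (Fin.last n).castSucc = Sum.inr 0 :=
    finSumFinEquiv.symm_apply_eq.2 rfl
  have hcast (l : Fin n) : (finSumFinEquiv (n := 2)).symm l.castSucc.castSucc = Sum.inl l :=
    finSumFinEquiv.symm_apply_eq.2 rfl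
  ext p q
  refine Fin.lastCases ?_ (Fin.lastCases ?_ fun l => ?_) p
  · simp [borderedMatrix_last, hlast]
  · simp [borderedMatrix_castSucc_last, hlast']
  · simp [borderedMatrix_castSucc_castSucc, hcast]

lemma updateRow_last_borderedMatrix (h : Fin (n + 2) → R) :
    (borderedMatrix Φ f g).updateRow (Fin.last (n + 1)) h = borderedMatrix Φ f h :=
  Fin.update_snoc_last (α := fun _ => Fin (n + 2) → R) ..

end Rows

variable {R : Type*} [CommRing R] {n : ℕ}

/-- The determinant of `Φ` bordered by the rows `f` and `g`: the pairing of `f ∧ g` with the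
maximal minors of `Φ`. -/
def borderedDet (Φ : Matrix (Fin n) (Fin (n + 2)) R) (f g : Fin (n + 2) → R) : R :=
  (borderedMatrix Φ f g).det

/-- The alternating matrix of signed maximal minors of `Φ`: up to sign, its `(i, j)` entry is the
minor of `Φ` obtained by deleting the columns `i` and `j`. -/
def complMinors (Φ : Matrix (Fin n) (Fin (n + 2)) R) : Matrix (Fin (n + 2)) (Fin (n + 2)) R :=
  of fun i j => borderedDet Φ (Pi.single i 1) (Pi.single j 1)

variable (Φ : Matrix (Fin n) (Fin (n + 2)) R)

lemma borderedMatrix_mulVec (f g v : Fin (n + 2) → R) :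
    borderedMatrix Φ f g *ᵥ v =
      Fin.snoc (α := fun _ => R) (Fin.snoc (α := fun _ => R) (Φ *ᵥ v) (f ⬝ᵥ v)) (g ⬝ᵥ v) := by
  ext p
  refine Fin.lastCases ?_ (Fin.lastCases ?_ fun l => ?_) p
  · simp [mulVec, borderedMatrix_last]
  · simp [mulVec, borderedMatrix_castSucc_last]
  · simp [mulVec, borderedMatrix_castSucc_castSucc]

lemma adjugate_borderedMatrix_last (f g : Fin (n + 2) → R) (l : Fin (n + 2)) :
    (borderedMatrix Φ f g).adjugate l (Fin.last (n + 1)) = borderedDet Φ f (Pi.single l 1) := by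
  rw [adjugate_apply, updateRow_last_borderedMatrix, borderedDet]

lemma borderedDet_eq_dotProduct (f g : Fin (n + 2) → R) :
    borderedDet Φ f g = g ⬝ᵥ fun l => borderedDet Φ f (Pi.single l 1) := by
  rw [borderedDet, det_eq_sum_mul_adjugate_row _ (Fin.last (n + 1)), borderedMatrix_last]
  simp only [adjugate_borderedMatrix_last, dotProduct]

lemma borderedDet_swap (f g : Fin (n + 2) → R) : borderedDet Φ g f = -borderedDet Φ f g := by
  have hne : (Fin.last n).castSucc ≠ Fin.last (n + 1) := (Fin.castSucc_lt_last _).ne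
  have hrows : borderedMatrix Φ g f = (borderedMatrix Φ f g).submatrix
      (Equiv.swap (Fin.last n).castSucc (Fin.last (n + 1))) id := by
    ext p q
    rw [submatrix_apply]
    refine Fin.lastCases ?_ (Fin.lastCases ?_ fun l => ?_) p
    · simp [borderedMatrix_last, borderedMatrix_castSucc_last]
    · simp [borderedMatrix_last, borderedMatrix_castSucc_last]
    · rw [Equiv.swap_apply_of_ne_of_ne
        ((Fin.castSucc_injective _).ne (Fin.castSucc_lt_last l).ne) (Fin.castSucc_lt_last _).ne]
      simp [borderedMatrix_castSucc_castSucc]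
  rw [borderedDet, hrows, det_permute, Equiv.Perm.sign_swap hne]
  simp [borderedDet]

lemma borderedDet_self (f : Fin (n + 2) → R) : borderedDet Φ f f = 0 :=
  det_zero_of_row_eq (Fin.castSucc_lt_last (Fin.last n)).ne
    ((borderedMatrix_castSucc_last Φ f f).trans (borderedMatrix_last Φ f f).symm)

lemma borderedDet_row (f : Fin (n + 2) → R) (l : Fin n) : borderedDet Φ f (Φ l) = 0 :=
  det_zero_of_row_eq (Fin.castSucc_lt_last l.castSucc).ne
    ((borderedMatrix_castSucc_castSucc Φ f _ l).trans (borderedMatrix_last Φ f _).symm)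

variable {Φ} in
lemma borderedDet_smul_of_mulVec_eq_zero {f v : Fin (n + 2) → R} (hv : Φ *ᵥ v = 0)
    (hf : f ⬝ᵥ v = 0) (g : Fin (n + 2) → R) :
    borderedDet Φ f g • v = (g ⬝ᵥ v) • fun l => borderedDet Φ f (Pi.single l 1) := by
  have hgv : borderedMatrix Φ f g *ᵥ v = Pi.single (Fin.last (n + 1)) (g ⬝ᵥ v) := by
    rw [borderedMatrix_mulVec, hv, hf]
    ext p
    refine Fin.lastCases ?_ (Fin.lastCases ?_ fun l => ?_) p
    · simp
    · simp [(Fin.castSucc_lt_last (Fin.last n)).ne]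
    · simp [(Fin.castSucc_lt_last l.castSucc).ne]
  calc borderedDet Φ f g • v
      = (borderedMatrix Φ f g).adjugate *ᵥ (borderedMatrix Φ f g *ᵥ v) := by
        rw [mulVec_mulVec, adjugate_mul, smul_mulVec, one_mulVec, borderedDet]
    _ = (g ⬝ᵥ v) • fun l => borderedDet Φ f (Pi.single l 1) := by
        rw [hgv]
        ext l
        simp [adjugate_borderedMatrix_last, mul_comm]

/-- Cramer's rule for `Φ v = w`, subject to `f ⬝ᵥ v = 0`. -/
lemma exists_mulVec_eq_borderedDet_smul (f g : Fin (n + 2) → R) (w : Fin n → R) :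
    ∃ v, f ⬝ᵥ v = 0 ∧ Φ *ᵥ v = borderedDet Φ f g • w := by
  let w' : Fin (n + 2) → R := Fin.snoc (α := fun _ => R) (Fin.snoc (α := fun _ => R) w 0) 0
  let v := (borderedMatrix Φ f g).adjugate *ᵥ w'
  have hv : borderedMatrix Φ f g *ᵥ v = borderedDet Φ f g • w' := by
    rw [mulVec_mulVec, mul_adjugate, smul_mulVec, one_mulVec, borderedDet]
  rw [borderedMatrix_mulVec] at hv
  refine ⟨v, by simpa [w'] using congrFun hv (Fin.last n).castSucc, funext fun l => ?_⟩
  simpa [w'] using congrFun hv l.castSucc.castSucc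

variable {Φ} in
lemma borderedDet_mul_borderedDet_transpose {S : Matrix (Fin (n + 2)) (Fin n) R} {x : R}
    (hS : Φ * S = x • 1) {s v : Fin (n + 2) → R} (hs : Φ *ᵥ s = 0) (hv : Φ *ᵥ v = 0)
    (f g : Fin (n + 2) → R) :
    borderedDet Φ f g * borderedDet Sᵀ s v =
      x ^ n * ((f ⬝ᵥ s) * (g ⬝ᵥ v) - (f ⬝ᵥ v) * (g ⬝ᵥ s)) := by
  have hblock : Φ * (of ![s, v])ᵀ = 0 := by
    ext l q
    fin_cases q
    · exact congrFun hs l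
    · exact congrFun hv l
  have hmul : borderedMatrix Φ f g * (borderedMatrix Sᵀ s v)ᵀ =
      (fromBlocks (Φ * S) 0 (of ![f, g] * S) (of ![f, g] * (of ![s, v])ᵀ)).submatrix
        finSumFinEquiv.symm finSumFinEquiv.symm := by
    rw [borderedMatrix_eq_submatrix_fromRows, borderedMatrix_eq_submatrix_fromRows,
      transpose_submatrix, ← submatrix_mul _ _ _ _ _ Function.bijective_id, transpose_fromRows,
      transpose_transpose, fromRows_mul_fromCols, hblock]
  rw [borderedDet, borderedDet, ← det_transpose (borderedMatrix Sᵀ s v), ← det_mul, hmul,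
    det_submatrix_equiv_self, det_fromBlocks_zero₁₂, hS, det_smul, det_fin_two]
  simp [Matrix.mul_apply, dotProduct]

lemma complMinors_self (i : Fin (n + 2)) : complMinors Φ i i = 0 :=
  borderedDet_self Φ _

lemma complMinors_swap (i j : Fin (n + 2)) : complMinors Φ j i = -complMinors Φ i j :=
  borderedDet_swap Φ _ _

lemma mulVec_complMinors (i : Fin (n + 2)) : Φ *ᵥ complMinors Φ i = 0 :=
  funext fun l => (borderedDet_eq_dotProduct Φ (Pi.single i 1) (Φ l)).symm.trans
    (borderedDet_row Φ _ l)

lemma complMinors_map {R' : Type*} [CommRing R'] (F : R →+* R') :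
    complMinors (Φ.map F) = (complMinors Φ).map F := by
  ext i j
  change (borderedMatrix _ _ _).det = F (borderedMatrix _ _ _).det
  rw [RingHom.map_det]
  congr 1
  ext p q
  refine Fin.lastCases ?_ (Fin.lastCases ?_ fun l => ?_) p
  · simp [borderedMatrix_last, Pi.single_apply, apply_ite F]
  · simp [borderedMatrix_castSucc_last, Pi.single_apply, apply_ite F]
  · simp [borderedMatrix_castSucc_castSucc]

variable {Φ}

lemma complMinors_mul_borderedDet_transpose {S : Matrix (Fin (n + 2)) (Fin n) R} {x : R}
    (hS : Φ * S = x • 1) {s v : Fin (n + 2) → R} (hs : Φ *ᵥ s = 0) (hv : Φ *ᵥ v = 0)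
    (i j : Fin (n + 2)) :
    complMinors Φ i j * borderedDet Sᵀ s v = x ^ n * (s i * v j - v i * s j) := by
  have := borderedDet_mul_borderedDet_transpose hS hs hv (Pi.single i 1) (Pi.single j 1)
  simpa [complMinors] using this

lemma complMinors_smul_of_mulVec_eq_zero {v : Fin (n + 2) → R} (hv : Φ *ᵥ v = 0)
    {i : Fin (n + 2)} (hi : v i = 0) (j : Fin (n + 2)) :
    complMinors Φ i j • v = v j • complMinors Φ i := by
  have := borderedDet_smul_of_mulVec_eq_zero hv (f := Pi.single i 1) (by simpa) (Pi.single j 1)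
  rwa [single_one_dotProduct] at this

variable (Φ) in
lemma exists_mulVec_eq_complMinors_smul (i j : Fin (n + 2)) (w : Fin n → R) :
    ∃ v : Fin (n + 2) → R, v i = 0 ∧ Φ *ᵥ v = complMinors Φ i j • w := by
  simpa [complMinors] using exists_mulVec_eq_borderedDet_smul Φ (Pi.single i 1) (Pi.single j 1) w

end BorderedDeterminant

section NonvanishingMinors

open Matrix

lemma exists_linearIndependent_snoc_single {F : Type*} [Field F] {m N : ℕ}
    {w : Fin m → Fin N → F} (hw : LinearIndependent F w) (hm : m < N) :
    ∃ i, LinearIndependent F (Fin.snoc (α := fun _ => Fin N → F) w (Pi.single i 1)) := by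
  suffices ∃ i, (Pi.single i 1 : Fin N → F) ∉ Submodule.span F (Set.range w) by
    obtain ⟨i, hi⟩ := this
    exact ⟨i, linearIndependent_finSnoc.2 ⟨hw, hi⟩⟩
  by_contra! hmem
  have htop : Submodule.span F (Set.range w) = ⊤ := by
    rw [eq_top_iff, ← (Pi.basisFun F (Fin N)).span_eq, Submodule.span_le]
    rintro _ ⟨i, rfl⟩
    simpa using hmem i
  have hcard := finrank_span_eq_card hw
  rw [htop, finrank_top, Module.finrank_fin_fun, Fintype.card_fin] at hcard
  exact hm.ne' hcard

lemma exists_complMinors_ne_zero_of_linearIndependent_field {F : Type*} [Field F] {n : ℕ}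
    {Φ : Matrix (Fin n) (Fin (n + 2)) F} (hΦ : LinearIndependent F Φ.row) :
    ∃ i j, complMinors Φ i j ≠ 0 := by
  obtain ⟨i, hi⟩ := exists_linearIndependent_snoc_single hΦ (by omega)
  obtain ⟨j, hj⟩ := exists_linearIndependent_snoc_single hi (by omega)
  have hrows : LinearIndependent F (borderedMatrix Φ (Pi.single i 1) (Pi.single j 1)).row := hj
  rw [linearIndependent_rows_iff_isUnit, isUnit_iff_isUnit_det] at hrows
  exact ⟨i, j, hrows.ne_zero⟩

variable {R : Type*} [CommRing R] [IsDomain R]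

lemma eq_zero_of_vecMul_eq_zero_of_mul_eq_smul_one {ι κ : Type*} [Fintype ι] [DecidableEq ι]
    [Fintype κ] {Φ : Matrix ι κ R} {S : Matrix κ ι R} {x : R} (hx : x ≠ 0) (hS : Φ * S = x • 1)
    {w : ι → R} (hw : w ᵥ* Φ = 0) : w = 0 := by
  have hxw : x • w = 0 := by
    rw [← vecMul_one (x • w), smul_vecMul, ← vecMul_smul, ← hS, ← vecMul_vecMul, hw, zero_vecMul]
  exact (smul_eq_zero.1 hxw).resolve_left hx

lemma exists_complMinors_ne_zero {n : ℕ} {Φ : Matrix (Fin n) (Fin (n + 2)) R}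
    {S : Matrix (Fin (n + 2)) (Fin n) R} {x : R} (hx : x ≠ 0) (hS : Φ * S = x • 1) :
    ∃ i j, complMinors Φ i j ≠ 0 := by
  let ι := algebraMap R (FractionRing R)
  have hι : ι x ≠ 0 := by simpa [ι] using hx
  have hSι : Φ.map ι * S.map ι = ι x • 1 := by
    rw [← Matrix.map_mul, hS]
    ext p q
    simp [Matrix.one_apply, apply_ite ι]
  have hrows : LinearIndependent (FractionRing R) (Φ.map ι).row :=
    vecMul_injective_iff.1 <| (injective_iff_map_eq_zero (vecMulLinear (Φ.map ι))).2
      fun _ => eq_zero_of_vecMul_eq_zero_of_mul_eq_smul_one hι hSι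
  obtain ⟨i, j, hij⟩ := exists_complMinors_ne_zero_of_linearIndependent_field hrows
  rw [complMinors_map] at hij
  exact ⟨i, j, fun h0 => hij (by rw [map_apply, h0, map_zero])⟩

end NonvanishingMinors

section BuchsbaumRim

open Matrix

lemma exists_eq_smul_of_smul_eq_smul {R ι : Type*} [CommRing R] [DecompositionMonoid R] {x y : R}
    (hxy : IsRelPrime x y) {v w : ι → R} (h : y • v = x • w) : ∃ u, v = x • u := by
  have hdvd (i : ι) : x ∣ v i := hxy.dvd_of_dvd_mul_left ⟨w i, congrFun h i⟩
  choose u hu using hdvd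
  exact ⟨u, funext hu⟩

variable {R : Type*} [CommRing R] [IsDomain R] [DecompositionMonoid R]
  {ι κ : Type*} [Fintype ι] [DecidableEq ι] [Fintype κ] {Φ : Matrix ι κ R}

/-- In homological terms: if the cokernel of `Φ` is killed by two coprime elements,
then `Ext¹ (coker Φ, R) = 0`. -/
lemma exists_eq_vecMul_of_forall_dotProduct_eq_zero {S T : Matrix κ ι R} {x y : R} (hx : x ≠ 0)
    (hxy : IsRelPrime x y) (hS : Φ * S = x • 1) (hT : Φ * T = y • 1)
    {f : κ → R} (hf : ∀ v, Φ *ᵥ v = 0 → f ⬝ᵥ v = 0) : ∃ μ, f = μ ᵥ* Φ := by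
  have hsmul {S : Matrix κ ι R} {x : R} (hS : Φ * S = x • 1) : x • f = (f ᵥ* S) ᵥ* Φ := by
    refine sub_eq_zero.1 (dotProduct_eq_zero _ fun v => ?_)
    have hker : Φ *ᵥ (x • v - S *ᵥ (Φ *ᵥ v)) = 0 := by
      rw [mulVec_sub, mulVec_mulVec, hS, mulVec_smul, smul_mulVec, one_mulVec, sub_self]
    have := hf _ hker
    rwa [dotProduct_sub, dotProduct_smul, dotProduct_mulVec, dotProduct_mulVec, ← smul_dotProduct,
      ← sub_dotProduct] at this
  have hcomm : y • (f ᵥ* S) = x • (f ᵥ* T) := by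
    refine sub_eq_zero.1 (eq_zero_of_vecMul_eq_zero_of_mul_eq_smul_one hx hS ?_)
    rw [sub_vecMul, smul_vecMul, smul_vecMul, ← hsmul hS, ← hsmul hT, smul_comm, sub_self]
  obtain ⟨μ, hμ⟩ := exists_eq_smul_of_smul_eq_smul hxy hcomm
  refine ⟨μ, smul_right_injective _ hx ?_⟩
  change x • f = x • (μ ᵥ* Φ)
  rw [hsmul hS, hμ, smul_vecMul]

/-- Functionals on `ker Φ` of the shape `f₁ / p = f₂ / q = f₃ / r` glue to an honest one; the
obstruction lies in `Ext² (coker Φ, R)`. -/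
lemma exists_forall_dotProduct_eq_mul {S T U : Matrix κ ι R} {x y z : R} (hx : x ≠ 0) (hy : y ≠ 0)
    (hz : z ≠ 0) (hxy : IsRelPrime x y) (hyz : IsRelPrime y z) (hzx : IsRelPrime z x)
    (hS : Φ * S = x • 1) (hT : Φ * T = y • 1) (hU : Φ * U = z • 1)
    {p q r : R} (hpq : IsRelPrime p q)
    (hr : ∀ t, r * t ∈ Ideal.span {p, q} → t ∈ Ideal.span {p, q}) {f₁ f₂ f₃ : κ → R}
    (h₁₂ : ∀ v, Φ *ᵥ v = 0 → q * (f₁ ⬝ᵥ v) = p * (f₂ ⬝ᵥ v))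
    (h₂₃ : ∀ v, Φ *ᵥ v = 0 → r * (f₂ ⬝ᵥ v) = q * (f₃ ⬝ᵥ v))
    (h₃₁ : ∀ v, Φ *ᵥ v = 0 → p * (f₃ ⬝ᵥ v) = r * (f₁ ⬝ᵥ v)) :
    ∃ f : κ → R, ∀ v, Φ *ᵥ v = 0 → f₁ ⬝ᵥ v = p * (f ⬝ᵥ v) := by
  have hker {s t : R} {f g : κ → R} (h : ∀ v, Φ *ᵥ v = 0 → s * (f ⬝ᵥ v) = t * (g ⬝ᵥ v))
      (v : κ → R) (hv : Φ *ᵥ v = 0) : (s • f - t • g) ⬝ᵥ v = 0 := by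
    rw [sub_dotProduct, smul_dotProduct, smul_dotProduct, smul_eq_mul, smul_eq_mul, h v hv,
      sub_self]
  obtain ⟨μ₁₂, hμ₁₂⟩ := exists_eq_vecMul_of_forall_dotProduct_eq_zero hx hxy hS hT (hker h₁₂)
  obtain ⟨μ₂₃, hμ₂₃⟩ := exists_eq_vecMul_of_forall_dotProduct_eq_zero hy hyz hT hU (hker h₂₃)
  obtain ⟨μ₃₁, hμ₃₁⟩ := exists_eq_vecMul_of_forall_dotProduct_eq_zero hz hzx hU hS (hker h₃₁)
  have hcocycle : r • μ₁₂ + p • μ₂₃ + q • μ₃₁ = 0 := by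
    refine eq_zero_of_vecMul_eq_zero_of_mul_eq_smul_one hx hS ?_
    rw [add_vecMul, add_vecMul, smul_vecMul, smul_vecMul, smul_vecMul, ← hμ₁₂, ← hμ₂₃, ← hμ₃₁]
    module
  have hcoboundary (l : ι) : ∃ u w, u * p + w * q = μ₁₂ l :=
    Ideal.mem_span_pair.1 <| hr _ <| Ideal.mem_span_pair.2
      ⟨-μ₂₃ l, -μ₃₁ l, by have : r * μ₁₂ l + p * μ₂₃ l + q * μ₃₁ l = 0 := congrFun hcocycle l
                          linear_combination -this⟩
  choose u w huw using hcoboundary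
  have hμ : μ₁₂ = p • u + q • w := funext fun l => by simp [← huw, mul_comm]
  obtain ⟨f, hf⟩ : ∃ f, f₁ - w ᵥ* Φ = p • f := by
    refine exists_eq_smul_of_smul_eq_smul hpq (w := f₂ + u ᵥ* Φ) ?_
    rw [hμ, add_vecMul, smul_vecMul, smul_vecMul] at hμ₁₂
    linear_combination (norm := module) hμ₁₂
  refine ⟨f, fun v hv => ?_⟩
  rw [← smul_eq_mul, ← smul_dotProduct, ← hf, sub_dotProduct, ← dotProduct_mulVec, hv,
    dotProduct_zero, sub_zero]

/-- Exactness of the Buchsbaum–Rim complex. -/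
lemma exists_complMinors_mulVec_eq {n : ℕ} {Φ : Matrix (Fin n) (Fin (n + 2)) R}
    {S T U : Matrix (Fin (n + 2)) (Fin n) R} {x y z : R} (hx : x ≠ 0) (hy : y ≠ 0) (hz : z ≠ 0)
    (hxy : IsRelPrime x y) (hyz : IsRelPrime y z) (hzx : IsRelPrime z x)
    (hS : Φ * S = x • 1) (hT : Φ * T = y • 1) (hU : Φ * U = z • 1)
    (hr : ∀ t, z ^ n * t ∈ Ideal.span {x ^ n, y ^ n} → t ∈ Ideal.span {x ^ n, y ^ n})
    {s : Fin (n + 2) → R} (hs : Φ *ᵥ s = 0) :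
    ∃ c : Fin (n + 2) → R, complMinors Φ *ᵥ c = s := by
  obtain ⟨i₀, j₀, hA⟩ := exists_complMinors_ne_zero hx hS
  have hcomm {S T : Matrix (Fin (n + 2)) (Fin n) R} {x y : R} (hS : Φ * S = x • 1)
      (hT : Φ * T = y • 1) (v : Fin (n + 2) → R) (hv : Φ *ᵥ v = 0) :
      y ^ n * ((fun l => borderedDet Sᵀ s (Pi.single l 1)) ⬝ᵥ v) =
        x ^ n * ((fun l => borderedDet Tᵀ s (Pi.single l 1)) ⬝ᵥ v) := by
    rw [dotProduct_comm, dotProduct_comm _ v, ← borderedDet_eq_dotProduct,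
      ← borderedDet_eq_dotProduct]
    refine mul_left_cancel₀ hA ?_
    linear_combination y ^ n * complMinors_mul_borderedDet_transpose hS hs hv i₀ j₀ -
      x ^ n * complMinors_mul_borderedDet_transpose hT hs hv i₀ j₀
  obtain ⟨c, hc⟩ := exists_forall_dotProduct_eq_mul hx hy hz hxy hyz hzx hS hT hU hxy.pow hr
    (hcomm hS hT) (hcomm hT hU) (hcomm hU hS)
  have hpair (i j l : Fin (n + 2)) : complMinors Φ i j * (c ⬝ᵥ complMinors Φ l) =
      s i * complMinors Φ l j - complMinors Φ l i * s j := by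
    have hl := mulVec_complMinors Φ l
    have hSc := hc _ hl
    rw [dotProduct_comm, ← borderedDet_eq_dotProduct] at hSc
    refine mul_left_cancel₀ (pow_ne_zero n hx) ?_
    rw [← complMinors_mul_borderedDet_transpose hS hs hl i j, hSc]
    ring
  refine ⟨c, funext fun i => ?_⟩
  change complMinors Φ i ⬝ᵥ c = s i
  rw [dotProduct_comm]
  by_cases hi : ∃ j, complMinors Φ i j ≠ 0
  · obtain ⟨j, hj⟩ := hi
    refine mul_left_cancel₀ hj ?_
    rw [hpair, complMinors_self]
    ring
  · push Not at hi
    have hsi : s i * complMinors Φ i₀ j₀ = 0 := by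
      simpa [hi, complMinors_swap Φ i i₀] using (hpair i j₀ i₀).symm
    rw [(mul_eq_zero.1 hsi).resolve_right hA]
    simp [dotProduct, hi]

end BuchsbaumRim

section IntHomogeneous

open Matrix

variable {σ A : Type*} [CommRing A]

/-- Homogeneity with respect to the total degree, the degree being an integer; for `d < 0` this
forces `p = 0`. On three variables over a field this is `homog`. -/
abbrev IsIntHomogeneous (p : MvPolynomial σ A) (d : ℤ) : Prop :=
  IsWeightedHomogeneous (fun _ : σ => (1 : ℤ)) p d

/-- The homogeneous component of integer degree `d`. -/
noncomputable abbrev intComponent (d : ℤ) : MvPolynomial σ A →ₗ[A] MvPolynomial σ A :=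
  weightedHomogeneousComponent (fun _ : σ => (1 : ℤ)) d

/-- The degree-`d` component of an element of `⊕ R(-a i)`, for `R = MvPolynomial σ A`. -/
noncomputable def vecComponent {ι : Type*} (a : ι → ℤ) (d : ℤ) :
    (ι → MvPolynomial σ A) →ₗ[A] (ι → MvPolynomial σ A) :=
  LinearMap.pi fun i => intComponent (d - a i) ∘ₗ LinearMap.proj i

lemma weight_one_int (u : σ →₀ ℕ) :
    Finsupp.weight (fun _ : σ => (1 : ℤ)) u = (u.degree : ℤ) := by
  simp [Finsupp.weight_apply, Finsupp.degree_apply, Finsupp.sum]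

lemma IsIntHomogeneous.degree_eq {p : MvPolynomial σ A} {d : ℤ} (hp : IsIntHomogeneous p d)
    {u : σ →₀ ℕ} (hu : coeff u p ≠ 0) : (u.degree : ℤ) = d :=
  (weight_one_int u).symm.trans (hp hu)

lemma IsIntHomogeneous.eq_zero_of_neg {p : MvPolynomial σ A} {d : ℤ}
    (hp : IsIntHomogeneous p d) (hd : d < 0) : p = 0 := by
  ext u
  by_contra hu
  have := hp.degree_eq hu
  omega

lemma isIntHomogeneous_X_pow (i : σ) (n : ℕ) :
    IsIntHomogeneous (X i ^ n : MvPolynomial σ A) n := by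
  simpa using (isWeightedHomogeneous_X A (fun _ : σ => (1 : ℤ)) i).pow n

lemma coeff_intComponent (d : ℤ) (p : MvPolynomial σ A) (u : σ →₀ ℕ) :
    coeff u (intComponent d p) = if (u.degree : ℤ) = d then coeff u p else 0 := by
  classical
  rw [coeff_weightedHomogeneousComponent, weight_one_int]

lemma IsIntHomogeneous.intComponent_mul {p : MvPolynomial σ A} {d : ℤ}
    (hp : IsIntHomogeneous p d) (q : MvPolynomial σ A) (e : ℤ) :
    intComponent e (p * q) = p * intComponent (e - d) q := by
  classical
  ext u
  rw [coeff_intComponent, coeff_mul, coeff_mul, ← Finset.sum_const_zero,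
    ← Finset.sum_ite_irrel]
  refine Finset.sum_congr rfl fun x hx => ?_
  by_cases hxp : coeff x.1 p = 0
  · simp [hxp]
  · have hdeg := hp.degree_eq hxp
    have hadd : u.degree = x.1.degree + x.2.degree := by
      rw [← Finset.HasAntidiagonal.mem_antidiagonal.1 hx, map_add]
    have hiff : (u.degree : ℤ) = e ↔ (x.2.degree : ℤ) = e - d := by
      rw [hadd]
      push_cast
      omega
    simp [coeff_intComponent, hiff]

section Vectors

variable {ι κ : Type*} {a : κ → ℤ} {b : ι → ℤ} {d : ℤ}

lemma isIntHomogeneous_vecComponent (d : ℤ) (f : κ → MvPolynomial σ A) (i : κ) :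
    IsIntHomogeneous (vecComponent a d f i) (d - a i) :=
  weightedHomogeneousComponent_isWeightedHomogeneous _ _

lemma vecComponent_eq_self {f : κ → MvPolynomial σ A}
    (hf : ∀ i, IsIntHomogeneous (f i) (d - a i)) : vecComponent a d f = f :=
  funext fun i => (hf i).weightedHomogeneousComponent_same

lemma vecComponent_smul {L : MvPolynomial σ A} {e : ℤ} (hL : IsIntHomogeneous L e)
    (f : κ → MvPolynomial σ A) : vecComponent a d (L • f) = L • vecComponent a (d - e) f := by
  ext1 i
  change intComponent _ (L * f i) = L * intComponent _ (f i)
  rw [IsIntHomogeneous.intComponent_mul hL, sub_right_comm]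

lemma vecComponent_smul_of_isIntHomogeneous {f : κ → MvPolynomial σ A} {e : ℤ}
    (hf : ∀ i, IsIntHomogeneous (f i) (e - a i)) (p : MvPolynomial σ A) :
    vecComponent a d (p • f) = intComponent (d - e) p • f := by
  ext1 i
  change intComponent _ (p * f i) = intComponent _ p * f i
  rw [mul_comm, IsIntHomogeneous.intComponent_mul (hf i), mul_comm, sub_sub_sub_cancel_right]

lemma isIntHomogeneous_smul {L : MvPolynomial σ A} {e : ℤ} (hL : IsIntHomogeneous L e)
    {f : κ → MvPolynomial σ A} (hf : ∀ i, IsIntHomogeneous (f i) (d - a i)) (i : κ) :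
    IsIntHomogeneous ((L • f) i) (e + d - a i) := by
  rw [add_sub_assoc]
  exact hL.mul (hf i)

variable [Fintype κ] {Φ : Matrix ι κ (MvPolynomial σ A)}

lemma mulVec_vecComponent (hΦ : ∀ j i, IsIntHomogeneous (Φ j i) (a i - b j))
    (f : κ → MvPolynomial σ A) : Φ *ᵥ vecComponent a d f = vecComponent b d (Φ *ᵥ f) := by
  ext1 j
  change ∑ i, Φ j i * intComponent (d - a i) (f i) = intComponent (d - b j) (∑ i, Φ j i * f i)
  rw [map_sum]
  refine Finset.sum_congr rfl fun i _ => ?_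
  rw [IsIntHomogeneous.intComponent_mul (hΦ j i), sub_sub_sub_cancel_right]

lemma mulVec_vecComponent_eq (hΦ : ∀ j i, IsIntHomogeneous (Φ j i) (a i - b j))
    {f : κ → MvPolynomial σ A} {g : ι → MvPolynomial σ A}
    (hg : ∀ j, IsIntHomogeneous (g j) (d - b j)) (hfg : Φ *ᵥ f = g) :
    Φ *ᵥ vecComponent a d f = g := by
  rw [mulVec_vecComponent hΦ, hfg, vecComponent_eq_self hg]

end Vectors

lemma isIntHomogeneous_det {ι : Type*} [Fintype ι] [DecidableEq ι]
    {M : Matrix ι ι (MvPolynomial σ A)} {a b : ι → ℤ}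
    (hM : ∀ p q, IsIntHomogeneous (M p q) (a q - b p)) :
    IsIntHomogeneous M.det (∑ i, a i - ∑ i, b i) := by
  rw [det_apply]
  refine IsWeightedHomogeneous.sum _ _ _ fun τ _ => ?_
  have hprod : IsIntHomogeneous (∏ i, M (τ i) i) (∑ i, a i - ∑ i, b i) := by
    rw [← Equiv.sum_comp τ b, ← Finset.sum_sub_distrib]
    exact IsWeightedHomogeneous.prod _ _ _ fun i _ => hM (τ i) i
  rcases Int.units_eq_one_or (Equiv.Perm.sign τ) with hτ | hτ
  · rwa [hτ, one_smul]
  · rw [hτ, Units.neg_smul, one_smul]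
    exact hprod.neg

lemma isIntHomogeneous_complMinors {n : ℕ} {Φ : Matrix (Fin n) (Fin (n + 2)) (MvPolynomial σ A)}
    {a : Fin (n + 2) → ℤ} {b : Fin n → ℤ} (hΦ : ∀ j i, IsIntHomogeneous (Φ j i) (a i - b j))
    (i j : Fin (n + 2)) :
    IsIntHomogeneous (complMinors Φ i j) (∑ l, a l - ∑ l, b l - a i - a j) := by
  have hsingle (i q : Fin (n + 2)) :
      IsIntHomogeneous ((Pi.single i 1 : Fin (n + 2) → MvPolynomial σ A) q) (a q - a i) := by
    obtain rfl | hq := eq_or_ne q i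
    · simpa using isWeightedHomogeneous_one A (fun _ : σ => (1 : ℤ))
    · simpa [hq] using isWeightedHomogeneous_zero A (fun _ : σ => (1 : ℤ)) _
  let b' : Fin (n + 2) → ℤ := Fin.snoc (α := fun _ => ℤ) (Fin.snoc (α := fun _ => ℤ) b (a i)) (a j)
  have hb' : ∑ l, a l - ∑ l, b' l = ∑ l, a l - ∑ l, b l - a i - a j := by
    simp only [b', Fin.sum_univ_castSucc (n := n + 1), Fin.sum_univ_castSucc (n := n),
      Fin.snoc_castSucc, Fin.snoc_last]
    ring
  rw [← hb']
  refine isIntHomogeneous_det fun p q => ?_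
  refine Fin.lastCases ?_ (Fin.lastCases ?_ fun l => ?_) p
  · simpa only [borderedMatrix_last, b', Fin.snoc_last] using hsingle j q
  · simpa only [borderedMatrix_castSucc_last, b', Fin.snoc_castSucc, Fin.snoc_last]
      using hsingle i q
  · simpa only [borderedMatrix_castSucc_castSucc, b', Fin.snoc_castSucc] using hΦ l q

end IntHomogeneous

section MonomialIdeals

variable {σ K : Type*} [Field K]

lemma isRelPrime_X_pow {i j : σ} (hij : i ≠ j) (a b : ℕ) :
    IsRelPrime (X i ^ a : MvPolynomial σ K) (X j ^ b) :=
  IsRelPrime.pow <| ((X_prime (i := i)).irreducible.isRelPrime_iff_not_dvd).2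
    (by simpa [X_dvd_X] using hij)

lemma mem_span_X_pow_pair {i j : σ} {a b : ℕ} {p : MvPolynomial σ K} :
    p ∈ Ideal.span {X i ^ a, X j ^ b} ↔ ∀ u ∈ p.support, a ≤ u i ∨ b ≤ u j := by
  classical
  have himage : (fun u => monomial u (1 : K)) '' {Finsupp.single i a, Finsupp.single j b} =
      {X i ^ a, X j ^ b} := by
    simp [Set.image_pair, X_pow_eq_monomial]
  rw [← himage, mem_ideal_span_monomial_image]
  simp

lemma mem_span_X_pow_pair_of_X_pow_mul_mem {i j l : σ} (hil : i ≠ l) (hjl : j ≠ l) {a b c : ℕ}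
    {p : MvPolynomial σ K} (hp : X l ^ c * p ∈ Ideal.span {X i ^ a, X j ^ b}) :
    p ∈ Ideal.span {X i ^ a, X j ^ b} := by
  classical
  rw [mem_span_X_pow_pair] at hp ⊢
  intro u hu
  have hlu : Finsupp.single l c + u ∈ (X l ^ c * p).support := by
    rw [X_pow_eq_monomial, mem_support_iff, coeff_monomial_mul]
    simpa using hu
  simpa [Finsupp.single_apply, hil.symm, hjl.symm] using hp _ hlu

lemma IsIntHomogeneous.mem_span_X_pow_pair {p : MvPolynomial (Fin 2) K} {d : ℤ}
    (hp : IsIntHomogeneous p d) {a b : ℕ} (hd : (a + b : ℤ) ≤ d + 1) :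
    p ∈ Ideal.span {X 0 ^ a, X 1 ^ b} := by
  rw [_root_.mem_span_X_pow_pair]
  intro u hu
  have hdeg := hp.degree_eq (mem_support_iff.1 hu)
  rw [Finsupp.degree_eq_sum, Fin.sum_univ_two] at hdeg
  omega

end MonomialIdeals

section Syzygies

open Matrix

variable {n : ℕ} {a : Fin (n + 2) → ℤ} {b : Fin n → ℤ}

section

variable {σ A : Type*} [CommRing A] {Φ : Matrix (Fin n) (Fin (n + 2)) (MvPolynomial σ A)}

lemma exists_complMinors_ne_zero_of_complMinors_mulVec_eq
    (hΦ : ∀ j i, IsIntHomogeneous (Φ j i) (a i - b j)) {s c : Fin (n + 2) → MvPolynomial σ A}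
    (hc : complMinors Φ *ᵥ c = s) {e : ℤ} (hs : ∀ i, IsIntHomogeneous (s i) (e - a i))
    (hs₀ : s ≠ 0) : ∃ i, complMinors Φ i ≠ 0 ∧ ∑ l, a l - ∑ l, b l - e ≤ a i := by
  obtain ⟨j, hj⟩ := Function.ne_iff.1 hs₀
  have hsum : ∑ i, intComponent (e - a j) (complMinors Φ j i * c i) = s j := by
    rw [← map_sum, ← (hs j).weightedHomogeneousComponent_same, ← hc]
    rfl
  obtain ⟨i, -, hi⟩ := Finset.exists_ne_zero_of_sum_ne_zero (hsum.trans_ne hj)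
  have hmin := isIntHomogeneous_complMinors hΦ j i
  rw [IsIntHomogeneous.intComponent_mul hmin] at hi
  refine ⟨i, fun h => left_ne_zero_of_mul hi ?_, ?_⟩
  · rw [complMinors_swap, h, Pi.zero_apply, neg_zero]
  · by_contra! hlt
    refine right_ne_zero_of_mul hi (IsIntHomogeneous.eq_zero_of_neg
      (weightedHomogeneousComponent_isWeightedHomogeneous _ _) (?_ : _ < _))
    omega

end

section

variable {σ K : Type*} [Field K]

lemma exists_coeff_ne_zero_degree_eq_totalDegree {p : MvPolynomial σ K} (hp : p ≠ 0) :
    ∃ u, coeff u p ≠ 0 ∧ u.degree = p.totalDegree := by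
  obtain ⟨u, hu, hdeg⟩ :=
    Finset.exists_mem_eq_sup p.support (support_nonempty.2 hp) (fun u => u.sum fun _ m => m)
  exact ⟨u, mem_support_iff.1 hu, hdeg.symm⟩

lemma IsIntHomogeneous.totalDegree {p : MvPolynomial σ K} {d : ℤ} (hp : IsIntHomogeneous p d)
    (hp₀ : p ≠ 0) : (p.totalDegree : ℤ) = d := by
  obtain ⟨u, hu, hdeg⟩ := exists_coeff_ne_zero_degree_eq_totalDegree hp₀
  rw [← hdeg, hp.degree_eq hu]

lemma isUnit_of_forall_dvd_of_minimal {ι κ : Type*} [Fintype κ] {a : κ → ℤ} {b : ι → ℤ}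
    {Φ : Matrix ι κ (MvPolynomial σ K)} (hΦ : ∀ j i, IsIntHomogeneous (Φ j i) (a i - b j))
    {e : ℤ} {s : κ → MvPolynomial σ K} (hs : ∀ i, IsIntHomogeneous (s i) (e - a i)) (hs₀ : s ≠ 0)
    (hΦs : Φ *ᵥ s = 0)
    (hmin : ∀ d (v : κ → MvPolynomial σ K), v ≠ 0 → (∀ i, IsIntHomogeneous (v i) (d - a i)) →
      Φ *ᵥ v = 0 → e ≤ d) {g : MvPolynomial σ K} (hg : ∀ i, g ∣ s i) : IsUnit g := by
  choose v hv using hg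
  obtain rfl : s = g • v := funext hv
  obtain ⟨hg₀, hv₀⟩ := smul_ne_zero_iff.1 hs₀
  obtain ⟨j, hj⟩ := Function.ne_iff.1 hv₀
  have hΦv : Φ *ᵥ v = 0 := by
    rw [mulVec_smul] at hΦs
    exact (smul_eq_zero.1 hΦs).resolve_left hg₀
  have hdeg : (g.totalDegree : ℤ) + (v j).totalDegree = e - a j := by
    rw [← (hs j).totalDegree (mul_ne_zero hg₀ hj), Pi.smul_apply, smul_eq_mul,
      totalDegree_mul_of_isDomain hg₀ hj, Nat.cast_add]
  have htop : vecComponent a ((v j).totalDegree + a j) v ≠ 0 := by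
    obtain ⟨u, hu, hudeg⟩ := exists_coeff_ne_zero_degree_eq_totalDegree hj
    refine fun h => hu ?_
    simpa [vecComponent, coeff_intComponent, hudeg] using congrArg (coeff u) (congrFun h j)
  have hle := hmin _ _ htop (isIntHomogeneous_vecComponent _ v)
    (by rw [mulVec_vecComponent hΦ, hΦv, map_zero])
  have hgC : g = C (coeff 0 g) := totalDegree_eq_zero_iff_eq_C.1 (by omega)
  rw [hgC] at hg₀ ⊢
  exact (isUnit_iff_ne_zero.2 fun h => hg₀ (by rw [h, C_0])).map C

end

variable {K : Type*} [Field K] {Φ : Matrix (Fin n) (Fin (n + 2)) (MvPolynomial (Fin 3) K)}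

lemma FiniteColength.exists_mul_eq_X_pow_smul_one (hfin : FiniteColength n a b Φ) :
    ∃ T : ℕ, ∀ t : Fin 3, ∃ S : Matrix (Fin (n + 2)) (Fin n) (MvPolynomial (Fin 3) K),
      Φ * S = (X t ^ T : MvPolynomial (Fin 3) K) • 1 := by
  obtain ⟨D, hD⟩ := hfin
  obtain ⟨T, hT⟩ : ∃ T : ℕ, ∀ j, D ≤ T + b j := by
    obtain ⟨T, hT⟩ := (Set.finite_range fun j => (D - b j).toNat).bddAbove
    exact ⟨T, fun j => by have : (D - b j).toNat ≤ T := hT ⟨j, rfl⟩; omega⟩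
  refine ⟨T, fun t => ?_⟩
  have hlift (j : Fin n) : ∃ f, Φ *ᵥ f = Pi.single j (X t ^ T : MvPolynomial (Fin 3) K) := by
    obtain ⟨f, -, hf⟩ := hD _ (hT j) (x := Pi.single j (X t ^ T)) <| mem_degPiece.2 fun i => by
      obtain rfl | hij := eq_or_ne i j
      · simpa [homog] using isIntHomogeneous_X_pow t T
      · simpa [homog, hij] using isWeightedHomogeneous_zero K _ _
    exact ⟨f, hf⟩
  choose f hf using hlift
  refine ⟨(of f)ᵀ, ext_of_mulVec_single fun j => ?_⟩
  rw [← mulVec_mulVec, mulVec_single_one, smul_mulVec, one_mulVec]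
  refine (hf j).trans ?_
  rw [← Pi.single_smul, smul_eq_mul, mul_one]

lemma FiniteColength.exists_complMinors_mulVec_eq (hfin : FiniteColength n a b Φ)
    {s : Fin (n + 2) → MvPolynomial (Fin 3) K} (hs : Φ *ᵥ s = 0) :
    ∃ c, complMinors Φ *ᵥ c = s := by
  obtain ⟨T, hT⟩ := hfin.exists_mul_eq_X_pow_smul_one
  obtain ⟨S₀, hS₀⟩ := hT 0
  obtain ⟨S₁, hS₁⟩ := hT 1
  obtain ⟨S₂, hS₂⟩ := hT 2
  have hX (t : Fin 3) : (X t ^ T : MvPolynomial (Fin 3) K) ≠ 0 := pow_ne_zero _ (X_ne_zero t)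
  refine _root_.exists_complMinors_mulVec_eq (hX 0) (hX 1) (hX 2) (isRelPrime_X_pow (by decide) T T)
    (isRelPrime_X_pow (by decide) T T) (isRelPrime_X_pow (by decide) T T) hS₀ hS₁ hS₂
    (fun p hp => ?_) hs
  simp only [← pow_mul] at hp ⊢
  exact mem_span_X_pow_pair_of_X_pow_mul_mem (by decide) (by decide) hp

lemma Nd_ne_bot_iff {e : ℤ} : Nd n a Φ e ≠ ⊥ ↔
    ∃ s : Fin (n + 2) → MvPolynomial (Fin 3) K,
      s ≠ 0 ∧ (∀ i, IsIntHomogeneous (s i) (e - a i)) ∧ Φ *ᵥ s = 0 := by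
  rw [Submodule.ne_bot_iff]
  exact ⟨fun ⟨s, ⟨hs, hΦs⟩, hs₀⟩ => ⟨s, hs₀, mem_degPiece.1 hs, hΦs⟩,
    fun ⟨s, hs₀, hs, hΦs⟩ => ⟨s, ⟨mem_degPiece.2 hs, hΦs⟩, hs₀⟩⟩

lemma FiniteColength.exists_complMinors_primitive (hfin : FiniteColength n a b Φ)
    (hΦ : ∀ j i, IsIntHomogeneous (Φ j i) (a i - b j)) {e : ℤ} (he : Nd n a Φ e ≠ ⊥)
    (hmin : ∀ d, Nd n a Φ d ≠ ⊥ → e ≤ d) :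
    ∃ i, a i = ∑ l, a l - ∑ l, b l - e ∧ complMinors Φ i ≠ 0 ∧
      ∀ g, (∀ j, g ∣ complMinors Φ i j) → IsUnit g := by
  obtain ⟨s, hs₀, hs, hΦs⟩ := Nd_ne_bot_iff.1 he
  obtain ⟨c, hc⟩ := hfin.exists_complMinors_mulVec_eq hΦs
  obtain ⟨i, hi, hle⟩ := exists_complMinors_ne_zero_of_complMinors_mulVec_eq hΦ hc hs hs₀
  have hdeg := isIntHomogeneous_complMinors hΦ i
  have hge := hmin _ (Nd_ne_bot_iff.2 ⟨_, hi, hdeg, mulVec_complMinors Φ i⟩)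
  have hai : a i = ∑ l, a l - ∑ l, b l - e := by omega
  refine ⟨i, hai, hi, fun g hg => isUnit_of_forall_dvd_of_minimal hΦ hdeg hi
    (mulVec_complMinors Φ i) (fun d v hv₀ hv hΦv => ?_) hg⟩
  have := hmin d (Nd_ne_bot_iff.2 ⟨v, hv₀, hv, hΦv⟩)
  omega

end Syzygies

section GeneralLinearForm

section

variable {σ K : Type*} [Field K]

lemma intComponent_zero (p : MvPolynomial σ K) : intComponent 0 p = C (constantCoeff p) := by
  classical
  ext u
  rw [coeff_intComponent, coeff_C, constantCoeff_eq]
  simp only [Nat.cast_eq_zero, Finsupp.degree_eq_zero_iff, eq_comm (a := u)]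
  split_ifs with hu
  · rw [hu]
  · rfl

lemma exists_isPrime_le_ker_constantCoeff {S : Set (MvPolynomial σ K)}
    (hS : ∀ p ∈ S, ∃ d, IsIntHomogeneous p d) {q : Ideal (MvPolynomial σ K)} (hq : q.IsPrime)
    (hSq : S ⊆ q) :
    ∃ q' : Ideal (MvPolynomial σ K), q'.IsPrime ∧ S ⊆ q' ∧ q' ≤ q ∧
      q' ≤ RingHom.ker (constantCoeff (σ := σ) (R := K)) := by
  let := weightedGradedAlgebra K (fun _ : σ => (1 : ℤ))
  let 𝒜 := weightedHomogeneousSubmodule K (fun _ : σ => (1 : ℤ))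
  refine ⟨(q.homogeneousCore 𝒜).toIdeal, hq.homogeneousCore, fun p hp => ?_,
    q.toIdeal_homogeneousCore_le 𝒜, fun p hp => ?_⟩
  · exact Ideal.mem_homogeneousCore_of_homogeneous_of_mem (hS p hp) (hSq hp)
  · have hcomp : C (constantCoeff p) ∈ q := by
      rw [← intComponent_zero]
      exact q.toIdeal_homogeneousCore_le 𝒜
        (weightedHomogeneousComponent_mem_of_mem _ _ (q.homogeneousCore 𝒜).isHomogeneous hp 0)
    by_contra hp₀
    exact hq.ne_top (Ideal.eq_top_of_isUnit_mem _ hcomp ((isUnit_iff_ne_zero.2 hp₀).map C))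

end

lemma two_le_height_of_forall_dvd {R : Type*} [CommRing R] [IsDomain R]
    [UniqueFactorizationMonoid R] {S : Set R} (hS : ∃ s ∈ S, s ≠ 0)
    (hprim : ∀ g, (∀ s ∈ S, g ∣ s) → IsUnit g) (p : Ideal R) [p.IsPrime] (hp : S ⊆ p) :
    2 ≤ p.height := by
  obtain ⟨s, hsS, hs₀⟩ := hS
  obtain ⟨g, hgp, hg⟩ := Ideal.IsPrime.exists_mem_prime_of_ne_bot ‹p.IsPrime›
    (fun h => hs₀ (by simpa [h] using hp hsS))
  have hgprime : (Ideal.span {g}).IsPrime := (Ideal.span_singleton_prime hg.ne_zero).2 hg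
  have hbot : ⊥ < Ideal.span {g} := by simpa [bot_lt_iff_ne_bot] using hg.ne_zero
  have hlt : Ideal.span {g} < p := by
    refine lt_of_le_of_ne ((Ideal.span_singleton_le_iff_mem _).2 hgp) fun h => ?_
    exact hg.not_isUnit (hprim g fun s hs => Ideal.mem_span_singleton.1 (h ▸ hp hs))
  calc (2 : ℕ∞) = 0 + 1 + 1 := rfl
    _ ≤ (⊥ : Ideal R).height + 1 + 1 := by gcongr; exact zero_le
    _ ≤ (Ideal.span {g}).height + 1 := by
      gcongr
      exact Ideal.height_add_one_le_of_lt_of_isPrime hbot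
    _ ≤ p.height := Ideal.height_add_one_le_of_lt_of_isPrime hlt

variable {K : Type*} [Field K]

lemma height_le_three (p : Ideal (MvPolynomial (Fin 3) K)) [p.IsPrime] : p.height ≤ 3 := by
  have hdim : ringKrullDim (MvPolynomial (Fin 3) K) = 3 := by
    simp [ringKrullDim_of_isNoetherianRing, ringKrullDim_eq_zero_of_field]
  have := Ideal.height_le_ringKrullDim_of_ne_top (I := p) Ideal.IsPrime.ne_top'
  rw [hdim] at this
  exact WithBot.coe_le_coe.1 this

lemma X_mem_radical_span_insert {S : Set (MvPolynomial (Fin 3) K)}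
    (hShom : ∀ p ∈ S, ∃ d, IsIntHomogeneous p d) (hS : ∃ s ∈ S, s ≠ 0)
    (hprim : ∀ g, (∀ s ∈ S, g ∣ s) → IsUnit g) {L : MvPolynomial (Fin 3) K} {d : ℤ}
    (hL : IsIntHomogeneous L d)
    (hLp : ∀ p ∈ (Ideal.span S).minimalPrimes, (∃ i, X i ∉ p) → L ∉ p) (t : Fin 3) :
    X t ∈ (Ideal.span (insert L S)).radical := by
  rw [Ideal.radical_eq_sInf, Ideal.mem_sInf]
  rintro q ⟨hSq, hq⟩
  by_contra hXq
  obtain ⟨q', hq', hSq', hqq', hq'M⟩ := exists_isPrime_le_ker_constantCoeff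
    (S := insert L S) (by rintro p (rfl | hp); exacts [⟨d, hL⟩, hShom p hp]) hq
    (Ideal.span_le.1 hSq)
  obtain ⟨hLq', hSq'⟩ := Set.insert_subset_iff.1 hSq'
  have hXq' : X t ∉ q' := fun h => hXq (hqq' h)
  obtain ⟨p, hpmin, hpq'⟩ := Ideal.exists_minimalPrimes_le (Ideal.span_le.2 hSq')
  have hp : p.IsPrime := hpmin.1.1
  have hpq'_lt : p < q' := by
    refine lt_of_le_of_ne hpq' ?_
    rintro rfl
    exact hLp p hpmin ⟨t, hXq'⟩ hLq'
  let M := RingHom.ker (constantCoeff (σ := Fin 3) (R := K))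
  have hM : M.IsPrime := RingHom.ker_isPrime _
  have hq'M_lt : q' < M := by
    refine lt_of_le_of_ne hq'M fun h => hXq' ?_
    rw [h]
    exact constantCoeff_X K t
  have hheight : (4 : ℕ∞) ≤ 3 := calc
    (4 : ℕ∞) = 2 + 1 + 1 := rfl
    _ ≤ p.height + 1 + 1 := by
      gcongr
      exact two_le_height_of_forall_dvd hS hprim p (Ideal.span_le.1 hpmin.1.2)
    _ ≤ q'.height + 1 := by gcongr; exact Ideal.height_add_one_le_of_lt_of_isPrime hpq'_lt
    _ ≤ M.height := Ideal.height_add_one_le_of_lt_of_isPrime hq'M_lt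
    _ ≤ 3 := height_le_three M
  exact absurd hheight (by decide)

lemma linform_eq_linearCombination (c : Fin 3 → K) :
    linform c = Fintype.linearCombination K X c := by
  simp [linform, Fintype.linearCombination_apply, smul_eq_C_mul]

lemma exists_forall_linform_not_mem (p : Ideal (MvPolynomial (Fin 3) K)) :
    ∃ P : MvPolynomial (Fin 3) K, P ≠ 0 ∧
      ∀ c, eval c P ≠ 0 → (∃ i, X i ∉ p) → linform c ∉ p := by
  by_cases hp : ∃ i : Fin 3, X i ∉ p
  · obtain ⟨i, hi⟩ := hp
    let V : Submodule K (Fin 3 → K) :=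
      (p.restrictScalars K).comap (Fintype.linearCombination K X)
    have hV : V < ⊤ := by
      refine lt_top_iff_ne_top.2 fun h => hi ?_
      have : Pi.single i 1 ∈ V := h ▸ Submodule.mem_top
      simpa [V] using this
    obtain ⟨ℓ, hℓ, hker⟩ := Submodule.exists_le_ker_of_lt_top V hV
    have heval (c : Fin 3 → K) : eval c (linform fun i => ℓ (Pi.single i 1)) = ℓ c := by
      conv_rhs => rw [pi_eq_sum_univ' c, map_sum]
      simp [linform, mul_comm]
    refine ⟨linform fun i => ℓ (Pi.single i 1), fun h => hℓ ?_, fun c hc _ hmem => hc ?_⟩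
    · exact LinearMap.ext fun c => by rw [← heval, h, map_zero, LinearMap.zero_apply]
    · rw [heval]
      exact hker (show _ ∈ p by rwa [← linform_eq_linearCombination])
  · exact ⟨1, one_ne_zero, fun _ _ h => absurd h hp⟩

lemma exists_forall_X_mem_radical {S : Set (MvPolynomial (Fin 3) K)}
    (hShom : ∀ p ∈ S, ∃ d, IsIntHomogeneous p d) (hS : ∃ s ∈ S, s ≠ 0)
    (hprim : ∀ g, (∀ s ∈ S, g ∣ s) → IsUnit g) :
    ∃ P : MvPolynomial (Fin 3) K, P ≠ 0 ∧ ∀ c, eval c P ≠ 0 →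
      ∀ t, X t ∈ (Ideal.span (insert (linform c) S)).radical := by
  have hfin := Ideal.finite_minimalPrimes_of_isNoetherianRing _ (Ideal.span S)
  choose P hP₀ hP using exists_forall_linform_not_mem (K := K)
  refine ⟨∏ p ∈ hfin.toFinset, P p, Finset.prod_ne_zero_iff.2 fun p _ => hP₀ p, fun c hc => ?_⟩
  rw [map_prod, Finset.prod_ne_zero_iff] at hc
  exact X_mem_radical_span_insert hShom hS hprim (homog_linform c)
    fun p hp => hP p c (hc p (hfin.mem_toFinset.2 hp))

end GeneralLinearForm

section RestrictionToLine

lemma IsIntHomogeneous.aeval {σ τ A : Type*} [CommRing A] {p : MvPolynomial σ A} {d : ℤ}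
    (hp : IsIntHomogeneous p d) {g : σ → MvPolynomial τ A}
    (hg : ∀ i, IsIntHomogeneous (g i) 1) : IsIntHomogeneous (aeval g p) d := by
  rw [aeval_def, eval₂_eq]
  refine IsWeightedHomogeneous.sum _ _ _ fun u hu => ?_
  have hprod : IsIntHomogeneous (∏ i ∈ u.support, g i ^ u i) (∑ i ∈ u.support, u i • (1 : ℤ)) :=
    IsWeightedHomogeneous.prod _ _ _ fun i _ => (hg i).pow (u i)
  have hdeg : ∑ i ∈ u.support, u i • (1 : ℤ) = d := by
    rw [← hp.degree_eq (mem_support_iff.1 hu), Finsupp.degree_apply]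
    simp
  rw [hdeg] at hprod
  simpa using (isWeightedHomogeneous_C (fun _ : τ => (1 : ℤ)) (coeff u p)).mul hprod

variable {K : Type*} [Field K] {c : Fin 3 → K}

/-- Restriction to the line `linform c = 0`, when `c 2 ≠ 0`: solve for the last variable. -/
noncomputable def restrictLine (c : Fin 3 → K) :
    MvPolynomial (Fin 3) K →ₐ[K] MvPolynomial (Fin 2) K :=
  aeval ![X 0, X 1, C (-(c 0 / c 2)) * X 0 + C (-(c 1 / c 2)) * X 1]

lemma restrictLine_rename (c : Fin 3 → K) (f : MvPolynomial (Fin 2) K) :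
    restrictLine c (rename Fin.castSucc f) = f := by
  have hcomp : (restrictLine c).comp (rename Fin.castSucc) = AlgHom.id K _ := by
    ext i
    fin_cases i <;> simp [restrictLine]
  exact DFunLike.congr_fun hcomp f

lemma restrictLine_linform (hc : c 2 ≠ 0) : restrictLine c (linform c) = 0 := by
  have hC : (C (c 2) * C (c 2)⁻¹ : MvPolynomial (Fin 2) K) = 1 := by
    rw [← C_mul, mul_inv_cancel₀ hc, C_1]
  simp only [restrictLine, div_eq_mul_inv, C_neg, linform, Fin.sum_univ_three, map_add,
    map_mul, algHom_C, algebraMap_eq, aeval_X, Matrix.cons_val_zero, Matrix.cons_val_one,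
    Matrix.cons_val]
  linear_combination (-(C (c 0) * X 0 + C (c 1) * X 1)) * hC

lemma linform_dvd_sub_rename_restrictLine (hc : c 2 ≠ 0) (f : MvPolynomial (Fin 3) K) :
    linform c ∣ f - rename Fin.castSucc (restrictLine c f) := by
  rw [← Ideal.mem_span_singleton, ← Ideal.Quotient.eq]
  let π := Ideal.Quotient.mkₐ K (Ideal.span {linform c})
  suffices h : π = (π.comp (rename Fin.castSucc)).comp (restrictLine c) from DFunLike.congr_fun h f
  ext i
  fin_cases i
  · simp [restrictLine]
  · simp [restrictLine]
  · change Ideal.Quotient.mk _ _ = Ideal.Quotient.mk _ _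
    rw [Ideal.Quotient.eq, Ideal.mem_span_singleton]
    refine ⟨C (c 2)⁻¹, ?_⟩
    have hC : (C (c 2) * C (c 2)⁻¹ : MvPolynomial (Fin 3) K) = 1 := by
      rw [← C_mul, mul_inv_cancel₀ hc, C_1]
    simp only [Fin.reduceFinMk, restrictLine, div_eq_mul_inv, RingHom.coe_coe,
      aeval_X, Matrix.cons_val, map_add, map_neg, map_mul, algHom_C, algebraMap_eq, rename_X,
      Fin.castSucc_zero, Fin.castSucc_one, linform, Fin.sum_univ_three]
    linear_combination (-X 2) * hC

lemma exists_sub_eq_linform_smul (hc : c 2 ≠ 0) {ι : Type*} {v w : ι → MvPolynomial (Fin 3) K}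
    (h : restrictLine c ∘ v = restrictLine c ∘ w) : ∃ u, v - w = linform c • u := by
  have hdvd (i : ι) : linform c ∣ v i - w i := by
    have hi : restrictLine c (v i) = restrictLine c (w i) := congrFun h i
    simpa [hi] using linform_dvd_sub_rename_restrictLine hc (v i - w i)
  choose u hu using hdvd
  exact ⟨u, funext hu⟩

lemma IsIntHomogeneous.restrictLine {p : MvPolynomial (Fin 3) K} {d : ℤ}
    (hp : IsIntHomogeneous p d) (c : Fin 3 → K) : IsIntHomogeneous (restrictLine c p) d := by
  have hX (i : Fin 2) : IsIntHomogeneous (X i : MvPolynomial (Fin 2) K) 1 :=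
    isWeightedHomogeneous_X K _ i
  have hCX (r : K) (i : Fin 2) : IsIntHomogeneous (C r * X i) 1 := by
    simpa using (isWeightedHomogeneous_C (fun _ : Fin 2 => (1 : ℤ)) r).mul (hX i)
  refine hp.aeval fun i => ?_
  fin_cases i
  exacts [hX 0, hX 1, (hCX _ 0).add (hCX _ 1)]

lemma linform_ne_zero (hc : c ≠ 0) : linform c ≠ 0 := by
  obtain ⟨i, hi⟩ := Function.ne_iff.1 hc
  intro h
  have heval : eval (Pi.single i 1) (linform c) = c i := by simp [linform, Pi.single_apply]
  exact hi (by simpa [h] using heval.symm)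

end RestrictionToLine

section OmittedColumn

open Matrix

variable {R : Type*} [CommRing R] {n : ℕ} {Ψ : Matrix (Fin n) (Fin (n + 2)) R} {i : Fin (n + 2)}

/-- The span of the columns of `Ψ` other than the `i`-th. -/
def spanColumnsNe (Ψ : Matrix (Fin n) (Fin (n + 2)) R) (i : Fin (n + 2)) :
    Submodule R (Fin n → R) :=
  (LinearMap.ker (LinearMap.proj (φ := fun _ => R) i)).map Ψ.mulVecLin

lemma mem_spanColumnsNe {g : Fin n → R} : g ∈ spanColumnsNe Ψ i ↔ ∃ f, f i = 0 ∧ Ψ *ᵥ f = g :=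
  Iff.rfl

lemma smul_mem_spanColumnsNe {x : R} (hx : x ∈ Ideal.span (Set.range (complMinors Ψ i)))
    (g : Fin n → R) : x • g ∈ spanColumnsNe Ψ i := by
  induction hx using Submodule.span_induction with
  | mem x hx =>
    obtain ⟨j, rfl⟩ := hx
    exact mem_spanColumnsNe.2 (exists_mulVec_eq_complMinors_smul Ψ i j g)
  | zero => simp
  | add x y _ _ hx hy => simpa [add_smul] using add_mem hx hy
  | smul r x _ hx => simpa [smul_smul] using Submodule.smul_mem _ r hx

lemma mem_spanColumnsNe_of_forall_mem {g : Fin n → R}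
    (hg : ∀ j, g j ∈ Ideal.span (Set.range (complMinors Ψ i))) : g ∈ spanColumnsNe Ψ i := by
  rw [pi_eq_sum_univ' g]
  exact sum_mem fun j _ => smul_mem_spanColumnsNe (hg j) _

variable [IsDomain R] [DecompositionMonoid R] {x y : R}

lemma exists_eq_smul_complMinors (hx : x ∈ Ideal.span (Set.range (complMinors Ψ i)))
    (hy : y ∈ Ideal.span (Set.range (complMinors Ψ i))) (hxy : IsRelPrime x y) (hx0 : x ≠ 0)
    {v : Fin (n + 2) → R} (hv : Ψ *ᵥ v = 0) (hvi : v i = 0) :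
    ∃ p : R, v = p • complMinors Ψ i := by
  have hsmul {z : R} (hz : z ∈ Ideal.span (Set.range (complMinors Ψ i))) :
      ∃ p : R, z • v = p • complMinors Ψ i := by
    have hle : Ideal.span (Set.range (complMinors Ψ i)) ≤
        (R ∙ complMinors Ψ i).comap (LinearMap.toSpanSingleton R _ v) := by
      refine Ideal.span_le.2 (Set.range_subset_iff.2 fun j => ?_)
      exact Submodule.mem_span_singleton.2
        ⟨v j, (complMinors_smul_of_mulVec_eq_zero hv hvi j).symm⟩
    obtain ⟨p, hp⟩ := Submodule.mem_span_singleton.1 (hle hz)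
    exact ⟨p, hp.symm⟩
  obtain ⟨p, hp⟩ := hsmul hx
  obtain ⟨q, hq⟩ := hsmul hy
  have hne : complMinors Ψ i ≠ 0 := by
    intro h
    rw [h, Pi.zero_def, Set.range_const, Ideal.mem_span_singleton, zero_dvd_iff] at hx
    exact hx0 hx
  have hpq : y * p = x * q := by
    refine smul_left_injective R hne ?_
    simp only [mul_smul, ← hp, ← hq, smul_comm x y]
  obtain ⟨u, rfl⟩ : x ∣ p := hxy.dvd_of_dvd_mul_left ⟨q, hpq⟩
  exact ⟨u, smul_right_injective _ hx0 (by simpa only [mul_smul] using hp)⟩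

lemma mem_spanColumnsNe_of_smul_mem {f₁ f₂ : Fin (n + 2) → R} {g : Fin n → R}
    (hxy : IsRelPrime x y) (hx0 : x ≠ 0) (h₁ : Ψ *ᵥ f₁ = x • g) (hi₁ : f₁ i = 0)
    {p : R} (hp : p ∈ Ideal.span {x, y}) (hf : y • f₁ - x • f₂ = p • complMinors Ψ i) :
    g ∈ spanColumnsNe Ψ i := by
  obtain ⟨α, β, rfl⟩ := Ideal.mem_span_pair.1 hp
  have hadj : y • (f₁ - β • complMinors Ψ i) = x • (f₂ + α • complMinors Ψ i) := by
    linear_combination (norm := module) hf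
  obtain ⟨u, hu⟩ := exists_eq_smul_of_smul_eq_smul hxy hadj
  refine mem_spanColumnsNe.2 ⟨u, ?_, smul_right_injective _ hx0 ?_⟩
  · have hui : x * u i = 0 := by simpa [hi₁, complMinors_self] using (congrFun hu i).symm
    exact (mul_eq_zero.1 hui).resolve_left hx0
  · change x • Ψ *ᵥ u = x • g
    rw [← mulVec_smul, ← hu, mulVec_sub, mulVec_smul, mulVec_complMinors, h₁, smul_zero, sub_zero]

end OmittedColumn

section BinaryForms

open Matrix

variable {K : Type*} [Field K] {n : ℕ} {a : Fin (n + 2) → ℤ} {b : Fin n → ℤ}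
  {Ψ : Matrix (Fin n) (Fin (n + 2)) (MvPolynomial (Fin 2) K)} {i : Fin (n + 2)}

lemma exists_eq_smul_complMinors_of_mem_radical
    (hrad : ∀ t, X t ∈ (Ideal.span (Set.range (complMinors Ψ i))).radical)
    {v : Fin (n + 2) → MvPolynomial (Fin 2) K} (hv : Ψ *ᵥ v = 0) (hvi : v i = 0) :
    ∃ p : MvPolynomial (Fin 2) K, v = p • complMinors Ψ i := by
  obtain ⟨r, hr⟩ := hrad 0
  obtain ⟨s, hs⟩ := hrad 1
  exact exists_eq_smul_complMinors hr hs (isRelPrime_X_pow zero_ne_one r s)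
    (pow_ne_zero r (X_ne_zero 0)) hv hvi

lemma exists_isIntHomogeneous_mulVec_eq (hΨ : ∀ j l, IsIntHomogeneous (Ψ j l) (a l - b j))
    {d : ℤ} {g : Fin n → MvPolynomial (Fin 2) K} (hg : ∀ j, IsIntHomogeneous (g j) (d - b j))
    (hgi : g ∈ spanColumnsNe Ψ i) :
    ∃ f, (∀ l, IsIntHomogeneous (f l) (d - a l)) ∧ f i = 0 ∧ Ψ *ᵥ f = g := by
  obtain ⟨f, hfi, hfg⟩ := mem_spanColumnsNe.1 hgi
  exact ⟨vecComponent a d f, isIntHomogeneous_vecComponent d f, by simp [vecComponent, hfi],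
    mulVec_vecComponent_eq hΨ hg hfg⟩

lemma exists_forall_mem_spanColumnsNe_of_le
    (hrad : ∀ t, X t ∈ (Ideal.span (Set.range (complMinors Ψ i))).radical) (b : Fin n → ℤ) :
    ∃ D : ℤ, ∀ d, D ≤ d → ∀ g : Fin n → MvPolynomial (Fin 2) K,
      (∀ j, IsIntHomogeneous (g j) (d - b j)) → g ∈ spanColumnsNe Ψ i := by
  obtain ⟨r, hr⟩ := hrad 0
  obtain ⟨s, hs⟩ := hrad 1
  obtain ⟨B, hB⟩ := Finite.exists_le b
  refine ⟨B + r + s, fun d hd g hg => mem_spanColumnsNe_of_forall_mem fun j => ?_⟩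
  have hle : Ideal.span {X 0 ^ r, X 1 ^ s} ≤ Ideal.span (Set.range (complMinors Ψ i)) :=
    Ideal.span_le.2 (Set.pair_subset hr hs)
  exact hle ((hg j).mem_span_X_pow_pair (by linarith [hB j]))

lemma mem_spanColumnsNe_of_X_smul_mem (hΨ : ∀ j l, IsIntHomogeneous (Ψ j l) (a l - b j))
    (hrad : ∀ t, X t ∈ (Ideal.span (Set.range (complMinors Ψ i))).radical) {e d : ℤ}
    (hs : ∀ l, IsIntHomogeneous (complMinors Ψ i l) (e - a l)) (hd : e - 1 ≤ d)
    {g : Fin n → MvPolynomial (Fin 2) K} (hg : ∀ j, IsIntHomogeneous (g j) (d - b j))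
    (hXg : ∀ t : Fin 2, (X t : MvPolynomial (Fin 2) K) • g ∈ spanColumnsNe Ψ i) :
    g ∈ spanColumnsNe Ψ i := by
  have hX (t : Fin 2) : IsIntHomogeneous (X t : MvPolynomial (Fin 2) K) 1 :=
    isWeightedHomogeneous_X K _ t
  have hpre (t : Fin 2) := exists_isIntHomogeneous_mulVec_eq hΨ
    (isIntHomogeneous_smul (hX t) hg) (hXg t)
  obtain ⟨f₁, hf₁, hi₁, h₁⟩ := hpre 0
  obtain ⟨f₂, hf₂, hi₂, h₂⟩ := hpre 1
  let v := (X 1 : MvPolynomial (Fin 2) K) • f₁ - (X 0 : MvPolynomial (Fin 2) K) • f₂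
  have hv : Ψ *ᵥ v = 0 := by
    rw [mulVec_sub, mulVec_smul, mulVec_smul, h₁, h₂, smul_comm, sub_self]
  have hvd (l : Fin (n + 2)) : IsIntHomogeneous (v l) (1 + (1 + d) - a l) :=
    (isIntHomogeneous_smul (hX 1) hf₁ l).sub (isIntHomogeneous_smul (hX 0) hf₂ l)
  obtain ⟨p, hp⟩ := exists_eq_smul_complMinors_of_mem_radical hrad hv (by simp [v, hi₁, hi₂])
  have hq : v = intComponent (1 + (1 + d) - e) p • complMinors Ψ i := by
    rw [← vecComponent_smul_of_isIntHomogeneous hs, ← hp, vecComponent_eq_self hvd]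
  have hmem : intComponent (1 + (1 + d) - e) p ∈ Ideal.span {X 0 ^ 1, X 1 ^ 1} :=
    IsIntHomogeneous.mem_span_X_pow_pair (weightedHomogeneousComponent_isWeightedHomogeneous _ _)
      (by push_cast; linarith)
  rw [pow_one, pow_one] at hmem
  exact mem_spanColumnsNe_of_smul_mem (by simpa using isRelPrime_X_pow zero_ne_one 1 1)
    (X_ne_zero 0) h₁ hi₁ hmem hq

lemma mem_spanColumnsNe_of_isIntHomogeneous (hΨ : ∀ j l, IsIntHomogeneous (Ψ j l) (a l - b j))
    (hrad : ∀ t, X t ∈ (Ideal.span (Set.range (complMinors Ψ i))).radical) {e d : ℤ}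
    (hs : ∀ l, IsIntHomogeneous (complMinors Ψ i l) (e - a l)) (hd : e - 1 ≤ d)
    {g : Fin n → MvPolynomial (Fin 2) K} (hg : ∀ j, IsIntHomogeneous (g j) (d - b j)) :
    g ∈ spanColumnsNe Ψ i := by
  obtain ⟨D, hD⟩ := exists_forall_mem_spanColumnsNe_of_le hrad b
  obtain ⟨k, hk⟩ : ∃ k : ℕ, D ≤ d + k := ⟨(D - d).toNat, by omega⟩
  induction k generalizing d g with
  | zero => exact hD d (by simpa using hk) g hg
  | succ k ih =>
    refine mem_spanColumnsNe_of_X_smul_mem hΨ hrad hs hd hg fun t => ih (by omega)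
      (isIntHomogeneous_smul (isWeightedHomogeneous_X K _ t) hg) (by push_cast at hk; omega)

end BinaryForms

section Transfer

open Matrix

variable {K : Type*} [Field K] {n : ℕ} {a : Fin (n + 2) → ℤ} {b : Fin n → ℤ}
  {Φ : Matrix (Fin n) (Fin (n + 2)) (MvPolynomial (Fin 3) K)} {c : Fin 3 → K}

variable (c Φ) in
lemma restrictLine_mulVec (v : Fin (n + 2) → MvPolynomial (Fin 3) K) :
    restrictLine c ∘ (Φ *ᵥ v) = Φ.map (restrictLine c) *ᵥ (restrictLine c ∘ v) := by
  ext1 j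
  simp [mulVec, dotProduct, map_sum]

lemma complMinors_map_restrictLine (i : Fin (n + 2)) :
    complMinors (Φ.map (restrictLine c)) i = restrictLine c ∘ complMinors Φ i :=
  congrFun (complMinors_map Φ (restrictLine c).toRingHom) i

lemma X_mem_radical_span_complMinors_map (hc : c 2 ≠ 0) {i : Fin (n + 2)}
    (h : ∀ t, X t ∈ (Ideal.span (insert (linform c) (Set.range (complMinors Φ i)))).radical)
    (t : Fin 2) :
    X t ∈ (Ideal.span (Set.range (complMinors (Φ.map (restrictLine c)) i))).radical := by
  obtain ⟨r, hr⟩ := h t.castSucc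
  refine ⟨r, ?_⟩
  have hle : Ideal.span (insert (linform c) (Set.range (complMinors Φ i))) ≤
      (Ideal.span (Set.range (complMinors (Φ.map (restrictLine c)) i))).comap (restrictLine c) := by
    refine Ideal.span_le.2 (Set.insert_subset ?_ (Set.range_subset_iff.2 fun j => ?_))
    · simp [restrictLine_linform hc]
    · refine Ideal.subset_span ⟨j, ?_⟩
      rw [complMinors_map_restrictLine, Function.comp_apply]
  have hX : restrictLine c (X t.castSucc) = X t := by
    simpa using restrictLine_rename c (X t)
  simpa only [Ideal.mem_comap, map_pow, hX] using hle hr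

lemma mulLmap_injective_of_forall (hΦ : ∀ j i, homog (Φ j i) (a i - b j)) {d : ℤ}
    (h : ∀ f g, (∀ i, homog (f i) (d - a i)) → Φ *ᵥ f = linform c • g → ∃ f', Φ *ᵥ f' = g) :
    Function.Injective (mulLmap n a b Φ (linform c) (homog_linform c) d) := by
  rw [injective_iff_map_eq_zero]
  intro x hx
  obtain ⟨⟨g, hg⟩, rfl⟩ := Submodule.Quotient.mk_surjective _ x
  obtain ⟨f, hf, hfg⟩ := (Submodule.Quotient.mk_eq_zero _).1 hx
  obtain ⟨f', hf'⟩ := h f g (mem_degPiece.1 hf) hfg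
  exact (Submodule.Quotient.mk_eq_zero _).2 ⟨vecComponent a (d - 1) f',
    mem_degPiece.2 (isIntHomogeneous_vecComponent _ _),
    mulVec_vecComponent_eq hΦ (mem_degPiece.1 hg) hf'⟩

lemma mulLmap_surjective_of_forall (hΦ : ∀ j i, homog (Φ j i) (a i - b j)) {d : ℤ}
    (h : ∀ g, (∀ j, homog (g j) (d - b j)) → ∃ f h, g - Φ *ᵥ f = linform c • h) :
    Function.Surjective (mulLmap n a b Φ (linform c) (homog_linform c) d) := by
  intro x
  obtain ⟨⟨g, hg⟩, rfl⟩ := Submodule.Quotient.mk_surjective _ x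
  obtain ⟨f, h, hfh⟩ := h g (mem_degPiece.1 hg)
  have hcomp : Φ *ᵥ vecComponent a d f = g - linform c • vecComponent b (d - 1) h := by
    rw [mulVec_vecComponent hΦ, ← vecComponent_smul (homog_linform c), ← hfh, map_sub,
      vecComponent_eq_self (mem_degPiece.1 hg), sub_sub_cancel]
  refine ⟨Submodule.Quotient.mk ⟨vecComponent b (d - 1) h,
    mem_degPiece.2 (isIntHomogeneous_vecComponent _ _)⟩, Eq.symm ?_⟩
  exact (Submodule.Quotient.eq _).2
    ⟨vecComponent a d f, mem_degPiece.2 (isIntHomogeneous_vecComponent _ _), hcomp⟩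

end Transfer

section GeneralLine

open Matrix

variable {K : Type*} [Field K] {n : ℕ} {a : Fin (n + 2) → ℤ} {b : Fin n → ℤ}
  {Φ : Matrix (Fin n) (Fin (n + 2)) (MvPolynomial (Fin 3) K)} {c : Fin 3 → K} {i : Fin (n + 2)}

lemma exists_mulVec_eq_of_mulVec_eq_linform_smul (hc : c 2 ≠ 0)
    (hrad : ∀ t, X t ∈ (Ideal.span (insert (linform c) (Set.range (complMinors Φ i)))).radical)
    {f : Fin (n + 2) → MvPolynomial (Fin 3) K} (hfi : f i = 0)
    {g : Fin n → MvPolynomial (Fin 3) K} (hfg : Φ *ᵥ f = linform c • g) :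
    ∃ f', Φ *ᵥ f' = g := by
  have hker : Φ.map (restrictLine c) *ᵥ (restrictLine c ∘ f) = 0 := by
    rw [← restrictLine_mulVec, hfg]
    ext1 j
    simp [restrictLine_linform hc]
  obtain ⟨p, hp⟩ := exists_eq_smul_complMinors_of_mem_radical
    (X_mem_radical_span_complMinors_map hc hrad) hker (by simp [hfi])
  obtain ⟨f', hf'⟩ := exists_sub_eq_linform_smul hc
    (v := f) (w := rename Fin.castSucc p • complMinors Φ i) (by
      rw [hp, complMinors_map_restrictLine]
      ext1 l
      simp [restrictLine_rename])
  have hL : linform c ≠ 0 := linform_ne_zero fun h => hc (congrFun h 2)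
  refine ⟨f', smul_right_injective _ hL ?_⟩
  change linform c • Φ *ᵥ f' = linform c • g
  rw [← mulVec_smul, ← hf', mulVec_sub, mulVec_smul, mulVec_complMinors, smul_zero, sub_zero, hfg]

lemma mulLmap_injective_of_lt (hΦ : ∀ j i, homog (Φ j i) (a i - b j)) (hc : c 2 ≠ 0)
    (hrad : ∀ t, X t ∈ (Ideal.span (insert (linform c) (Set.range (complMinors Φ i)))).radical)
    {d : ℤ} (hd : d < a i) :
    Function.Injective (mulLmap n a b Φ (linform c) (homog_linform c) d) :=
  mulLmap_injective_of_forall hΦ fun _ _ hf hfg =>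
    exists_mulVec_eq_of_mulVec_eq_linform_smul hc hrad
      (IsIntHomogeneous.eq_zero_of_neg (hf i) (by omega)) hfg

lemma mulLmap_surjective_of_le (hΦ : ∀ j i, homog (Φ j i) (a i - b j)) (hc : c 2 ≠ 0)
    (hrad : ∀ t, X t ∈ (Ideal.span (insert (linform c) (Set.range (complMinors Φ i)))).radical)
    {d : ℤ} (hd : ∑ l, a l - ∑ l, b l - a i - 1 ≤ d) :
    Function.Surjective (mulLmap n a b Φ (linform c) (homog_linform c) d) := by
  refine mulLmap_surjective_of_forall hΦ fun g hg => ?_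
  have hΨ (j l) : IsIntHomogeneous (Φ.map (restrictLine c) j l) (a l - b j) :=
    IsIntHomogeneous.restrictLine (hΦ j l) c
  have hmem : restrictLine c ∘ g ∈ spanColumnsNe (Φ.map (restrictLine c)) i :=
    mem_spanColumnsNe_of_isIntHomogeneous hΨ (X_mem_radical_span_complMinors_map hc hrad)
      (isIntHomogeneous_complMinors hΨ i) hd fun j => IsIntHomogeneous.restrictLine (hg j) c
  obtain ⟨f, -, hf⟩ := mem_spanColumnsNe.1 hmem
  have hlift : restrictLine c ∘ (fun l => rename Fin.castSucc (f l)) = f := by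
    ext1 l
    exact restrictLine_rename c (f l)
  have heq : restrictLine c ∘ g = restrictLine c ∘ (Φ *ᵥ fun l => rename Fin.castSucc (f l)) := by
    rw [restrictLine_mulVec, hlift, hf]
  obtain ⟨h, hh⟩ := exists_sub_eq_linform_smul hc heq
  exact ⟨_, h, hh⟩

end GeneralLine

theorem statement3_general {K : Type*} [Field K] (n : ℕ) (a : Fin (n + 2) → ℤ) (b : Fin n → ℤ)
    (Φ : Matrix (Fin n) (Fin (n + 2)) (MvPolynomial (Fin 3) K))
    (hΦ : ∀ j i, homog (Φ j i) (a i - b j)) (hfin : FiniteColength n a b Φ)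
    (e : ℤ) (he : Nd n a Φ e ≠ ⊥) (hmin : ∀ d, Nd n a Φ d ≠ ⊥ → e ≤ d) :
    ∃ P : MvPolynomial (Fin 3) K, P ≠ 0 ∧ ∀ c : Fin 3 → K, eval c P ≠ 0 →
      (∀ d : ℤ, d < ∑ i, a i - ∑ j, b j - e →
        Function.Injective (mulLmap n a b Φ (linform c) (homog_linform c) d)) ∧
      (∀ d : ℤ, e - 1 ≤ d →
        Function.Surjective (mulLmap n a b Φ (linform c) (homog_linform c) d)) := by
  obtain ⟨i, hi, hs, hprim⟩ := hfin.exists_complMinors_primitive hΦ he hmin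
  obtain ⟨l, hl⟩ := Function.ne_iff.1 hs
  obtain ⟨P, hP, hrad⟩ := exists_forall_X_mem_radical (S := Set.range (complMinors Φ i))
    (Set.forall_mem_range.2 fun j => ⟨_, isIntHomogeneous_complMinors hΦ i j⟩)
    ⟨_, Set.mem_range_self l, hl⟩ fun g hg => hprim g fun j => hg _ (Set.mem_range_self j)
  refine ⟨X 2 * P, mul_ne_zero (X_ne_zero 2) hP, fun c hcP => ?_⟩
  rw [map_mul, eval_X] at hcP
  have hc : c 2 ≠ 0 := left_ne_zero_of_mul hcP
  have hradc := hrad c (right_ne_zero_of_mul hcP)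
  exact ⟨fun d hd => mulLmap_injective_of_lt hΦ hc hradc (by omega),
    fun d hd => mulLmap_surjective_of_le hΦ hc hradc (by omega)⟩

/-- If `a - b` is even (`a - b = 2m`) and `N_{m-1} ≠ 0` (the associated
normalized rank-2 bundle with `c₁ = 0` is unstable), and `k = max{ j : N_{m-j} ≠ 0 }` is the
index of instability, then for a general linear form `L` the multiplication map
`×L : M_{d-1} → M_d` is injective for all `d ≤ m + k - 1` and surjective for all
`d ≥ m - k - 1`. -/
theorem statement3 {K : Type*} [Field K] [IsAlgClosed K] [CharZero K]
    (n : ℕ) (a : Fin (n + 2) → ℤ) (b : Fin n → ℤ)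
    (Φ : Matrix (Fin n) (Fin (n + 2)) (MvPolynomial (Fin 3) K))
    (hΦ : ∀ j i, homog (Φ j i) (a i - b j))
    (hfin : FiniteColength n a b Φ)
    (m : ℤ) (hm : (∑ i, a i) - (∑ j, b j) = 2 * m)
    (hunstable : Nd n a Φ (m - 1) ≠ ⊥)
    (k : ℤ) (hk₁ : Nd n a Φ (m - k) ≠ ⊥) (hk₂ : ∀ j : ℤ, Nd n a Φ (m - j) ≠ ⊥ → j ≤ k) :
    ∃ P : MvPolynomial (Fin 3) K, P ≠ 0 ∧ ∀ c : Fin 3 → K, eval c P ≠ 0 →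
      (∀ d : ℤ, d ≤ m + k - 1 →
        Function.Injective (mulLmap n a b Φ (linform c) (homog_linform c) d)) ∧
      (∀ d : ℤ, m - k - 1 ≤ d →
        Function.Surjective (mulLmap n a b Φ (linform c) (homog_linform c) d)) := by
  obtain ⟨P, hP, hgen⟩ := statement3_general n a b Φ hΦ hfin (m - k) hk₁ fun d hd => by
    linarith [hk₂ (m - d) (by rwa [sub_sub_cancel])]
  exact ⟨P, hP, fun c hc => ⟨fun d hd => (hgen c hc).1 d (by omega), (hgen c hc).2⟩⟩
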